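/- For coprime positive integers a and b, the variance of the number of boxes over the uniform distribution on simultaneous (a,b)-cores equals ab(a-1)(b-1)(a+b)(a+b+1)/1440. -/

import Mathlib

/-- The hook length of the cell `(i, j)` in a Young diagram. -/
def YoungDiagram.hookLength (μ : YoungDiagram) (i j : ℕ) : ℕ :=
  (μ.rowLen i - j) + (μ.colLen j - i) - 1

/-- A Young diagram is an `a`-core if none of its hook lengths is divisible by `a`. -/
def YoungDiagram.IsCore (μ : YoungDiagram) (a : ℕ) : Prop :=
  ∀ i j : ℕ, (i, j) ∈ μ → ¬ a ∣ μ.hookLength i j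

/-!
The first-column hook lengths of a diagram, placed as beads on an abacus with `a` runners, show that
an `a`-core amounts to the positions `T r` of the first gaps on its runners, one for each residue
`r` modulo `a`; it is also a `b`-core exactly when `T (r + b) ≤ T r + b`. As `b` generates
`ZMod a`, walking `r, r + b, r + 2 b, …` records `T` as a composition of `b` into `a` nonnegative
parts `x n = (T (r + n b) + b - T (r + (n + 1) b)) / a`. The `a` starting points `r` make every
composition occur once, so compositions of `b` are an `a`-to-one cover of the `(a, b)`-cores.

Up to an additive constant, the size of a core is half the variance of `T`, which is the quadratic
form `a / 2 * ∑ G (i - j) x i x j`, where `G` is the Green function of the cycle of length `a`. The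
rows of `G` sum to zero, so under the uniform distribution on compositions the first two moments of
this form depend only on the parts of the joint moments of `x` that involve every index. These are
the cumulants of independent geometric variables, from which uniform compositions arise by
conditioning on the sum.
-/

namespace SimultaneousCores

open Finset Matrix

section QuadraticForm

variable {ι : Type*} [Fintype ι] {R : Type*} [CommRing R]

theorem add_const_dotProduct_mulVec {K : Matrix ι ι R} (hK : K.IsSymm) (hrow : K *ᵥ 1 = 0)
    (u : ι → R) (c : R) : (u + c • 1) ⬝ᵥ K *ᵥ (u + c • 1) = u ⬝ᵥ K *ᵥ u := by
  have hcol : 1 ᵥ* K = 0 := by rw [← mulVec_transpose, hK.eq, hrow]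
  rw [mulVec_add, mulVec_smul, hrow, smul_zero, add_zero, add_dotProduct, smul_dotProduct,
    dotProduct_mulVec 1, hcol, zero_dotProduct, smul_zero, add_zero]

theorem dotProduct_mulVec_natCast {K : Matrix ι ι R} (hK : K.IsSymm) (hrow : K *ᵥ 1 = 0)
    (x : ι → ℕ) : (Nat.cast ∘ x) ⬝ᵥ K *ᵥ (Nat.cast ∘ x) =
      (fun i ↦ (x i : R) + 1) ⬝ᵥ K *ᵥ (fun i ↦ (x i : R) + 1) := by
  rw [← add_const_dotProduct_mulVec hK hrow _ 1, one_smul]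
  rfl

/-- The contraction `∑ K i j * K k l * W i j k l` of two copies of a kernel with a function of four
indices, as a linear function of `W`. -/
def doubleContraction (K : Matrix ι ι R) : (ι → ι → ι → ι → R) →ₗ[R] R where
  toFun W := ∑ i, ∑ j, ∑ k, ∑ l, K i j * K k l * W i j k l
  map_add' W W' := by simp only [Pi.add_apply, mul_add, sum_add_distrib]
  map_smul' c W := by simp only [Pi.smul_apply, smul_eq_mul, RingHom.id_apply, mul_sum,
    mul_left_comm c]

theorem doubleContraction_apply (K : Matrix ι ι R) (W : ι → ι → ι → ι → R) :
    doubleContraction K W = ∑ i, ∑ j, ∑ k, ∑ l, K i j * K k l * W i j k l :=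
  rfl

theorem sum_sum_mul_eq_zero {K : Matrix ι ι R} (hK : K.IsSymm) (hrow : K *ᵥ 1 = 0) (f : ι → R) :
    ∑ i, ∑ j, K i j * f i = 0 ∧ ∑ i, ∑ j, K i j * f j = 0 := by
  have hsum (i : ι) : ∑ j, K i j = 0 := by simpa [mulVec, dotProduct] using congrFun hrow i
  refine ⟨by simp only [← sum_mul, hsum, zero_mul, sum_const_zero], ?_⟩
  rw [sum_comm]
  simp only [← sum_mul, fun i j ↦ hK.apply j i, hsum, zero_mul, sum_const_zero]

theorem doubleContraction_eq_zero {K : Matrix ι ι R} (hK : K.IsSymm) (hrow : K *ᵥ 1 = 0)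
    (f₁ f₂ f₃ f₄ : ι → ι → ι → R) :
    doubleContraction K (fun i j k l ↦ f₁ j k l + f₂ i k l + f₃ i j l + f₄ i j k) = 0 := by
  have hzero (f : ι → R) := sum_sum_mul_eq_zero hK hrow f
  simp only [doubleContraction_apply, mul_add, sum_add_distrib, mul_assoc, ← mul_sum]
  simp only [(hzero _).1, (hzero _).2, mul_zero, sum_const_zero, add_zero]

theorem doubleContraction_diag [DecidableEq ι] (K : Matrix ι ι R) :
    doubleContraction K (fun i j k l ↦ (1 : Matrix ι ι R) i j * (1 : Matrix ι ι R) i k *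
      (1 : Matrix ι ι R) i l) = ∑ i, K i i ^ 2 := by
  simp [doubleContraction_apply, one_apply, sq]

theorem doubleContraction_pairings [DecidableEq ι] {K : Matrix ι ι R} (hK : K.IsSymm) :
    doubleContraction K (fun i j k l ↦ (1 : Matrix ι ι R) i j * (1 : Matrix ι ι R) k l +
      (1 : Matrix ι ι R) i k * (1 : Matrix ι ι R) j l +
      (1 : Matrix ι ι R) i l * (1 : Matrix ι ι R) j k) =
      K.trace ^ 2 + 2 * ∑ i, ∑ j, K i j ^ 2 := by
  have htrace : ∑ i, ∑ j, ∑ k, ∑ l, K i j * K k l *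
      ((1 : Matrix ι ι R) i j * (1 : Matrix ι ι R) k l) = K.trace ^ 2 := by
    simp [one_apply, trace, sq, sum_mul_sum]
  have hparallel : ∑ i, ∑ j, ∑ k, ∑ l, K i j * K k l *
      ((1 : Matrix ι ι R) i k * (1 : Matrix ι ι R) j l) = ∑ i, ∑ j, K i j ^ 2 := by
    simp [one_apply, sq]
  have hcrossed : ∑ i, ∑ j, ∑ k, ∑ l, K i j * K k l *
      ((1 : Matrix ι ι R) i l * (1 : Matrix ι ι R) j k) = ∑ i, ∑ j, K i j ^ 2 := by
    simp [one_apply, sq, fun i j ↦ hK.apply i j]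
  simp only [doubleContraction_apply, mul_add, sum_add_distrib, htrace, hparallel, hcrossed]
  ring

theorem sq_dotProduct_mulVec (K : Matrix ι ι R) (u : ι → R) :
    (u ⬝ᵥ K *ᵥ u) ^ 2 = doubleContraction K (fun i j k l ↦ u i * u j * u k * u l) := by
  simp only [doubleContraction_apply, dotProduct, mulVec, sq, sum_mul, mul_sum]
  refine sum_congr rfl fun i _ ↦ sum_congr rfl fun j _ ↦ sum_congr rfl fun k _ ↦
    sum_congr rfl fun l _ ↦ ?_
  ring

end QuadraticForm

section CompositionMoments

variable {ι : Type*} [DecidableEq ι] {R : Type*} [CommRing R]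

local notation "δ" => (1 : Matrix ι ι R)

/-- The product of the rising factorials `(x i + 1)(x i + 2)⋯(x i + m i)`, where `m i` is the
multiplicity of `i` in the list, built up one factor at a time. -/
def risingProd (x : ι → ℕ) : List ι → ℕ
  | [] => 1
  | j :: l => (x j + 1 + l.count j) * risingProd x l

theorem cast_risingProd_cons (x : ι → ℕ) (i : ι) (l : List ι) :
    (risingProd x (i :: l) : R) = (x i + 1 + (l.map (δ i)).sum) * risingProd x l := by
  have hcount : (l.count i : R) = (l.map (δ i)).sum := by
    induction l with
    | nil => simp
    | cons j l ih =>
      rw [List.count_cons, Nat.cast_add, ih, List.map_cons, List.sum_cons, add_comm]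
      simp [Matrix.one_apply, eq_comm (a := i)]
  rw [risingProd, ← hcount]
  push_cast
  rfl

variable [Fintype ι]

theorem coeff_prod_eq_sum_piAntidiag (f : ι → PowerSeries R) (b : ℕ) :
    PowerSeries.coeff b (∏ i, f i) =
      ∑ x ∈ piAntidiag univ b, ∏ i, PowerSeries.coeff (x i) (f i) := by
  rw [PowerSeries.coeff_prod]
  refine sum_nbij' (fun l ↦ ⇑l) Finsupp.equivFunOnFinite.symm ?_ ?_ ?_ ?_ ?_ <;> simp

theorem coeff_mk_one_pow (d b : ℕ) :
    PowerSeries.coeff b ((PowerSeries.mk 1 : PowerSeries ℤ) ^ d) = d.multichoose b := by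
  cases d with
  | zero => cases b <;> simp [PowerSeries.coeff_one]
  | succ d =>
    rw [PowerSeries.mk_one_pow_eq_mk_choose_add, PowerSeries.coeff_mk, Nat.multichoose_eq,
      Nat.choose_symm_of_eq_add (by omega : d + 1 + b - 1 = b + d), Nat.add_right_comm,
      Nat.add_sub_cancel]

theorem sum_piAntidiag_prod_choose (k : ι → ℕ) (b : ℕ) :
    ∑ x ∈ piAntidiag univ b, ∏ i, (k i + x i).choose (k i) =
      (∑ i, (k i + 1)).multichoose b := by
  have h := coeff_prod_eq_sum_piAntidiag
    (fun i ↦ (PowerSeries.mk 1 : PowerSeries ℤ) ^ (k i + 1)) b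
  rw [prod_pow_eq_pow_sum, coeff_mk_one_pow] at h
  simp only [PowerSeries.mk_one_pow_eq_mk_choose_add, PowerSeries.coeff_mk] at h
  exact_mod_cast h.symm

theorem prod_ascFactorial_count (x : ι → ℕ) (l : List ι) :
    ∏ i, (x i + 1).ascFactorial (l.count i) = risingProd x l := by
  induction l with
  | nil => simp [risingProd]
  | cons j l ih =>
    rw [risingProd, ← ih, ← mul_prod_erase _ _ (mem_univ j), ← mul_prod_erase univ
      (fun i ↦ (x i + 1).ascFactorial (l.count i)) (mem_univ j), List.count_cons_self,
      Nat.ascFactorial_succ, mul_assoc]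
    congr 2
    refine prod_congr rfl fun i hi ↦ ?_
    rw [List.count_cons_of_ne (ne_of_mem_erase hi).symm]

theorem sum_piAntidiag_risingProd (l : List ι) (b : ℕ) :
    ∑ x ∈ piAntidiag univ b, risingProd x l =
      risingProd 0 l * (Fintype.card ι + l.length).multichoose b := by
  have hlength : Fintype.card ι + l.length = ∑ i, (l.count i + 1) := by
    have hcount : ∑ i, l.count i = l.length :=
      by simpa using Multiset.sum_count_eq_card (m := (l : Multiset ι)) fun i _ ↦ mem_univ i
    rw [sum_add_distrib, hcount, sum_const, smul_eq_mul, mul_one, add_comm, card_univ]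
  rw [hlength, ← sum_piAntidiag_prod_choose, mul_sum]
  refine sum_congr rfl fun x _ ↦ ?_
  rw [← prod_ascFactorial_count, ← prod_ascFactorial_count, ← prod_mul_distrib]
  refine prod_congr rfl fun i _ ↦ ?_
  rw [Pi.zero_apply, zero_add, Nat.one_ascFactorial, Nat.ascFactorial_eq_factorial_mul_choose,
    add_comm (x i)]

theorem card_piAntidiag_univ (b : ℕ) :
    #(piAntidiag (univ : Finset ι) b) = (Fintype.card ι).multichoose b := by
  simpa [risingProd] using sum_piAntidiag_risingProd ([] : List ι) b

local notation "M(" k "," b ")" => ((Nat.multichoose (Fintype.card ι + k) b : ℕ) : R)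

theorem cast_sum_piAntidiag_risingProd (l : List ι) (b : ℕ) :
    ∑ x ∈ piAntidiag univ b, (risingProd x l : R) = risingProd 0 l * M(l.length, b) := by
  exact_mod_cast congrArg (Nat.cast (R := R)) (sum_piAntidiag_risingProd l b)

-- The geometric law `(1 - z) * z ^ k` has second and fourth cumulants `w ^ 2 - w` and
-- `6 * w ^ 4 - 12 * w ^ 3 + 7 * w ^ 2 - w`, where `w = (1 - z)⁻¹`. Summing over compositions of `b`
-- replaces `w ^ k` by `M(k, b)`, the coefficient of `z ^ b` in `w ^ (card ι + k)`.
theorem sum_piAntidiag_mul (b : ℕ) (i j : ι) :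
    ∑ x ∈ piAntidiag univ b, ((x i : R) + 1) * (x j + 1) =
      (1 + δ i j) * M(2, b) - δ i j * M(1, b) := by
  have hx (x : ι → ℕ) : ((x i : R) + 1) * (x j + 1) =
      risingProd x [i, j] - δ i j * risingProd x [j] := by
    simp only [cast_risingProd_cons, List.map_cons, List.map_nil, List.sum_cons, List.sum_nil]
    simp only [risingProd]
    ring
  simp only [hx, sum_sub_distrib, ← mul_sum, cast_sum_piAntidiag_risingProd]
  simp only [cast_risingProd_cons, List.map_cons, List.map_nil, List.sum_cons, List.sum_nil]
  simp [risingProd]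

theorem sum_piAntidiag_mul_mul_mul (b : ℕ) (i j k l : ι) :
    ∑ x ∈ piAntidiag univ b, ((x i : R) + 1) * (x j + 1) * (x k + 1) * (x l + 1) =
      (6 * M(4, b) - 12 * M(3, b) + 7 * M(2, b) - M(1, b)) * (δ i j * δ i k * δ i l)
        + (M(4, b) - 2 * M(3, b) + M(2, b)) *
            (δ i j * δ k l + δ i k * δ j l + δ i l * δ j k)
        + (2 * M(4, b) - 3 * M(3, b) + M(2, b)) *
            (δ i j * δ i k + δ i j * δ i l + δ i k * δ k l + δ j k * δ k l)
        + (M(4, b) - M(3, b)) * (δ i j + δ i k + δ i l + δ j k + δ j l + δ k l)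
        + M(4, b) := by
  have hx (x : ι → ℕ) : ((x i : R) + 1) * (x j + 1) * (x k + 1) * (x l + 1) =
      risingProd x [i, j, k, l] - (δ i j + δ i k + δ i l) * risingProd x [j, k, l]
        - (δ j k + δ j l) * (risingProd x [i, k, l] - (δ i k + δ i l) * risingProd x [k, l])
        - δ k l * (risingProd x [i, j, l] - (δ i j + δ i l) * risingProd x [j, l])
        + δ k l * δ j l * (risingProd x [i, l] - δ i l * risingProd x [l]) := by
    simp only [cast_risingProd_cons, List.map_cons, List.map_nil, List.sum_cons, List.sum_nil]
    simp only [risingProd]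
    ring
  simp only [hx, sum_add_distrib, sum_sub_distrib, ← mul_sum, cast_sum_piAntidiag_risingProd]
  simp only [cast_risingProd_cons, List.map_cons, List.map_nil, List.sum_cons, List.sum_nil]
  simp only [risingProd, List.length_cons, List.length_nil, Pi.zero_apply, Nat.cast_zero,
    Nat.cast_one, zero_add, Nat.reduceAdd, add_zero, mul_one]
  clear hx
  -- Both sides depend only on which of the four indices coincide.
  rcases eq_or_ne i j with hij | hij <;> rcases eq_or_ne i k with hik | hik <;>
    rcases eq_or_ne i l with hil | hil <;> rcases eq_or_ne j k with hjk | hjk <;>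
    rcases eq_or_ne j l with hjl | hjl <;> rcases eq_or_ne k l with hkl | hkl <;>
    subst_vars <;> simp_all only [Matrix.one_apply_eq, ne_eq, not_false_eq_true,
      Matrix.one_apply_ne, not_true_eq_false] <;>
    ring

theorem sum_piAntidiag_quadForm {K : Matrix ι ι R} (hK : K.IsSymm) (hrow : K *ᵥ 1 = 0) (b : ℕ) :
    ∑ x ∈ piAntidiag univ b, (Nat.cast ∘ x) ⬝ᵥ K *ᵥ (Nat.cast ∘ x) =
      (M(2, b) - M(1, b)) * K.trace := by
  have hone (K' : Matrix ι ι R) : ∑ i, ∑ j, K' i j * δ i j = K'.trace := by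
    simp [one_apply, trace]
  have hzero := (sum_sum_mul_eq_zero hK hrow 1).1
  simp only [dotProduct_mulVec_natCast hK hrow]
  simp only [dotProduct, mulVec, mul_sum]
  rw [sum_comm]
  simp only [sum_comm (s := piAntidiag univ b)]
  have hterm (i j : ι) : ∑ x ∈ piAntidiag univ b, ((x i : R) + 1) * (K i j * (x j + 1)) =
      M(2, b) * (K i j * 1) + (M(2, b) - M(1, b)) * (K i j * δ i j) := by
    simp only [mul_left_comm _ (K i j), ← mul_sum, sum_piAntidiag_mul]
    ring
  simp only [hterm, sum_add_distrib, ← mul_sum, hone]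
  simp_all

theorem sum_piAntidiag_quadForm_sq {K : Matrix ι ι R} (hK : K.IsSymm) (hrow : K *ᵥ 1 = 0)
    (b : ℕ) :
    ∑ x ∈ piAntidiag univ b, ((Nat.cast ∘ x) ⬝ᵥ K *ᵥ (Nat.cast ∘ x)) ^ 2 =
      (6 * M(4, b) - 12 * M(3, b) + 7 * M(2, b) - M(1, b)) * ∑ i, K i i ^ 2 +
        (M(4, b) - 2 * M(3, b) + M(2, b)) * (K.trace ^ 2 + 2 * ∑ i, ∑ j, K i j ^ 2) := by
  set κ := 6 * M(4, b) - 12 * M(3, b) + 7 * M(2, b) - M(1, b)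
  set σ := M(4, b) - 2 * M(3, b) + M(2, b)
  set τ := 2 * M(4, b) - 3 * M(3, b) + M(2, b)
  set ρ := M(4, b) - M(3, b)
  have hmoment : ∑ x ∈ piAntidiag univ b, (fun i j k l ↦
      ((x i : R) + 1) * (x j + 1) * (x k + 1) * (x l + 1)) =
      κ • (fun i j k l ↦ δ i j * δ i k * δ i l) +
      σ • (fun i j k l ↦ δ i j * δ k l + δ i k * δ j l + δ i l * δ j k) +
      fun i j k l ↦ (τ * (δ j k * δ k l) + ρ * (δ j k + δ j l)) +
        (τ * (δ i k * δ k l) + ρ * (δ i k + δ k l)) +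
        (τ * (δ i j * δ i l) + ρ * (δ i j + δ i l)) +
        (τ * (δ i j * δ i k) + M(4, b)) := by
    ext i j k l
    simp only [Finset.sum_apply, sum_piAntidiag_mul_mul_mul, Pi.add_apply, Pi.smul_apply,
      smul_eq_mul]
    ring
  simp only [dotProduct_mulVec_natCast hK hrow, sq_dotProduct_mulVec, ← map_sum, hmoment]
  rw [map_add, map_add, map_smul, map_smul, doubleContraction_diag,
    doubleContraction_pairings hK, doubleContraction_eq_zero hK hrow (fun j k l ↦ _),
    add_zero, smul_eq_mul, smul_eq_mul]

end CompositionMoments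

section MultichooseIdentities

theorem mul_succ_multichoose (n b : ℕ) :
    n * (n + 1).multichoose b = (n + b) * n.multichoose b := by
  cases n with
  | zero => cases b <;> simp
  | succ n =>
    rw [Nat.multichoose_eq, Nat.multichoose_eq, show n + 1 + 1 + b - 1 = n + b + 1 by omega,
      show n + 1 + b - 1 = n + b by omega, mul_comm, mul_comm (n + 1 + b),
      show n + 1 + b = n + b + 1 by omega, Nat.choose_mul_succ_eq,
      show n + b + 1 - b = n + 1 by omega]

theorem cast_succ_multichoose {n : ℕ} (hn : n ≠ 0) (b : ℕ) :
    ((n + 1).multichoose b : ℚ) = (n + b) / n * n.multichoose b := by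
  have h : (n : ℚ) * (n + 1).multichoose b = (n + b) * n.multichoose b := by
    exact_mod_cast mul_succ_multichoose n b
  field_simp
  linear_combination h

theorem cast_multichoose_add {n : ℕ} (hn : n ≠ 0) (b : ℕ) :
    ((n + 1).multichoose b : ℚ) = n.multichoose b * ((n + b) / n) ∧
    ((n + 2).multichoose b : ℚ) = n.multichoose b * ((n + b) * (n + b + 1) / (n * (n + 1))) ∧
    ((n + 3).multichoose b : ℚ) = n.multichoose b *
      ((n + b) * (n + b + 1) * (n + b + 2) / (n * (n + 1) * (n + 2))) ∧
    ((n + 4).multichoose b : ℚ) = n.multichoose b *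
      ((n + b) * (n + b + 1) * (n + b + 2) * (n + b + 3) / (n * (n + 1) * (n + 2) * (n + 3))) := by
  have h₁ := cast_succ_multichoose hn b
  have h₂ := cast_succ_multichoose n.succ_ne_zero b
  have h₃ := cast_succ_multichoose (n + 1).succ_ne_zero b
  have h₄ := cast_succ_multichoose (n + 2).succ_ne_zero b
  simp only [Nat.succ_eq_add_one, add_assoc, Nat.reduceAdd] at h₂ h₃ h₄
  rw [h₄, h₃, h₂, h₁]
  push_cast
  refine ⟨?_, ?_, ?_, ?_⟩ <;> field_simp <;> ring

theorem multichoose_variance {n : ℕ} (hn : n ≠ 0) (b : ℕ) :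
    ((n + 2).multichoose b - (n + 1).multichoose b : ℚ) =
      n.multichoose b * (b * (n + b) / (n * (n + 1))) := by
  obtain ⟨h₁, h₂, -, -⟩ := cast_multichoose_add hn b
  rw [h₁, h₂]
  field_simp
  ring

theorem multichoose_variance_sq {n : ℕ} (hn : n ≠ 0) (b : ℕ) :
    ((n + 4).multichoose b - 2 * (n + 3).multichoose b + (n + 2).multichoose b : ℚ) =
      n.multichoose b *
        (b * (b - 1) * (n + b) * (n + b + 1) / (n * (n + 1) * (n + 2) * (n + 3))) := by
  obtain ⟨-, h₂, h₃, h₄⟩ := cast_multichoose_add hn b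
  rw [h₂, h₃, h₄]
  field_simp
  ring

theorem multichoose_fourth_cumulant {n : ℕ} (hn : n ≠ 0) (b : ℕ) :
    (6 * (n + 4).multichoose b - 12 * (n + 3).multichoose b + 7 * (n + 2).multichoose b
      - (n + 1).multichoose b : ℚ) = n.multichoose b *
        (b * (n + b) * (6 * b * (n + b) + n * (n - 1)) / (n * (n + 1) * (n + 2) * (n + 3))) := by
  obtain ⟨h₁, h₂, h₃, h₄⟩ := cast_multichoose_add hn b
  rw [h₁, h₂, h₃, h₄]
  field_simp
  ring

end MultichooseIdentities

section GreenMatrix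

theorem sum_range_pow_le_four (n : ℕ) :
    (∑ v ∈ range n, (v : ℚ) = n * (n - 1) / 2) ∧
    (∑ v ∈ range n, (v : ℚ) ^ 2 = n * (n - 1) * (2 * n - 1) / 6) ∧
    (∑ v ∈ range n, (v : ℚ) ^ 3 = (n * (n - 1) / 2) ^ 2) ∧
    ∑ v ∈ range n, (v : ℚ) ^ 4 = n * (n - 1) * (2 * n - 1) * (3 * n ^ 2 - 3 * n - 1) / 30 := by
  induction n with
  | zero => simp
  | succ n ih =>
    obtain ⟨h₁, h₂, h₃, h₄⟩ := ih
    simp only [sum_range_succ, h₁, h₂, h₃, h₄, Nat.cast_add, Nat.cast_one]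
    refine ⟨?_, ?_, ?_, ?_⟩ <;> ring

/-- The quadratic polynomial whose values at `0, …, a - 1` are the Green function of the cycle of
length `a`, normalised to have sum zero there. -/
def cyclePotential (a : ℕ) (x : ℚ) : ℚ :=
  ((a : ℚ) ^ 2 - 1) / (12 * a) - x * (a - x) / (2 * a)

/-- The Green function of the cycle of length `a`, that is of the Cayley graph of `ZMod a` with
respect to `±1`. -/
def cycleGreen (a : ℕ) (d : ZMod a) : ℚ :=
  cyclePotential a d.val

theorem cycleGreen_zero (a : ℕ) : cycleGreen a 0 = ((a : ℚ) ^ 2 - 1) / (12 * a) := by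
  simp [cycleGreen, cyclePotential]

variable (a : ℕ) [NeZero a]

theorem sum_comp_val {M : Type*} [AddCommMonoid M] (f : ℕ → M) :
    ∑ n : ZMod a, f n.val = ∑ i ∈ range a, f i := by
  obtain ⟨n, rfl⟩ := Nat.exists_eq_succ_of_ne_zero (NeZero.ne a)
  exact Fin.sum_univ_eq_sum_range f (n + 1)

theorem sum_cycleGreen : ∑ d, cycleGreen a d = 0 := by
  have ha : (a : ℚ) ≠ 0 := NeZero.ne _
  obtain ⟨h₁, h₂, -, -⟩ := sum_range_pow_le_four a
  have hpoly (x : ℚ) : cyclePotential a x =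
      (a ^ 2 - 1) / (12 * a) - 1 / 2 * x + 1 / (2 * a) * x ^ 2 := by
    rw [cyclePotential]
    field_simp
    ring
  refine (sum_comp_val a fun v ↦ cyclePotential a v).trans ?_
  simp only [hpoly, sum_add_distrib, sum_sub_distrib, ← mul_sum, h₁, h₂, sum_const,
    card_range, nsmul_eq_mul]
  field_simp
  ring

theorem sum_cycleGreen_sq :
    ∑ d, cycleGreen a d ^ 2 = ((a : ℚ) ^ 2 - 1) * (a ^ 2 + 11) / (720 * a) := by
  have ha : (a : ℚ) ≠ 0 := NeZero.ne _
  obtain ⟨h₁, h₂, h₃, h₄⟩ := sum_range_pow_le_four a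
  have hpoly (x : ℚ) : cyclePotential a x ^ 2 =
      ((a ^ 2 - 1) / (12 * a)) ^ 2 - (a ^ 2 - 1) / (12 * a) * x
        + ((a ^ 2 - 1) / (12 * a ^ 2) + 1 / 4) * x ^ 2
        - 1 / (2 * a) * x ^ 3 + 1 / (4 * a ^ 2) * x ^ 4 := by
    rw [cyclePotential]
    field_simp
    ring
  refine (sum_comp_val a fun v ↦ cyclePotential a v ^ 2).trans ?_
  simp only [hpoly, sum_add_distrib, sum_sub_distrib, ← mul_sum, h₁, h₂, h₃, h₄, sum_const,
    card_range, nsmul_eq_mul]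
  field_simp
  ring

theorem cycleGreen_neg (d : ZMod a) : cycleGreen a (-d) = cycleGreen a d := by
  rw [cycleGreen, cycleGreen, ZMod.neg_val]
  split_ifs with h
  · simp [h]
  · rw [Nat.cast_sub (ZMod.val_lt d).le, cyclePotential, cyclePotential]
    ring

theorem cycleGreen_add_one (d : ZMod a) : cycleGreen a (d + 1) = cyclePotential a (d.val + 1) := by
  have hcast : ((d.val + 1 : ℕ) : ZMod a) = d + 1 := by simp
  rcases (Nat.succ_le_of_lt (ZMod.val_lt d)).lt_or_eq with h | h
  · rw [cycleGreen, ← hcast, ZMod.val_natCast_of_lt h, Nat.cast_add_one]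
  · have ha : (d.val + 1 : ℚ) = a := by exact_mod_cast h
    rw [cycleGreen, ← hcast, ← Nat.succ_eq_add_one, h, ha]
    simp [cyclePotential]

theorem cycleGreen_sub_one (d : ZMod a) :
    cycleGreen a (d - 1) = if d = 0 then cyclePotential a 1 else cyclePotential a (d.val - 1) := by
  rw [← cycleGreen_neg, neg_sub', sub_neg_eq_add, cycleGreen_add_one, ZMod.neg_val]
  split_ifs with h
  · simp
  · rw [Nat.cast_sub (ZMod.val_lt d).le, cyclePotential, cyclePotential]
    ring

theorem laplacian_cycleGreen (d : ZMod a) :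
    2 * cycleGreen a d - cycleGreen a (d - 1) - cycleGreen a (d + 1) =
      (if d = 0 then 1 else 0) - 1 / a := by
  have ha : (a : ℚ) ≠ 0 := NeZero.ne _
  rw [cycleGreen_add_one, cycleGreen_sub_one, cycleGreen]
  split_ifs with h
  · simp only [h, ZMod.val_zero, cyclePotential, Nat.cast_zero]
    field_simp
    ring
  · simp only [cyclePotential]
    field_simp
    ring

/-- The Green function of the cycle of length `a` as a translation-invariant kernel. -/
def greenMatrix : Matrix (ZMod a) (ZMod a) ℚ :=
  circulant (cycleGreen a)

theorem isSymm_greenMatrix : (greenMatrix a).IsSymm :=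
  circulant_isSymm_iff.mpr (cycleGreen_neg a)

theorem greenMatrix_mulVec_one : greenMatrix a *ᵥ 1 = 0 := by
  ext i
  simpa [greenMatrix, mulVec, dotProduct] using
    ((Equiv.subLeft i).sum_comp (cycleGreen a)).trans (sum_cycleGreen a)

theorem trace_greenMatrix : (greenMatrix a).trace = ((a : ℚ) ^ 2 - 1) / 12 := by
  have ha : (a : ℚ) ≠ 0 := NeZero.ne _
  simp only [trace, diag_apply, greenMatrix, circulant_apply, sub_self, cycleGreen_zero, sum_const,
    card_univ, ZMod.card, nsmul_eq_mul]
  field_simp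

theorem sum_greenMatrix_diag_sq :
    ∑ i, greenMatrix a i i ^ 2 = ((a : ℚ) ^ 2 - 1) ^ 2 / (144 * a) := by
  have ha : (a : ℚ) ≠ 0 := NeZero.ne _
  simp only [greenMatrix, circulant_apply, sub_self, cycleGreen_zero, sum_const, card_univ,
    ZMod.card, nsmul_eq_mul]
  field_simp
  norm_num

theorem sum_greenMatrix_sq :
    ∑ i, ∑ j, greenMatrix a i j ^ 2 = ((a : ℚ) ^ 2 - 1) * (a ^ 2 + 11) / 720 := by
  have ha : (a : ℚ) ≠ 0 := NeZero.ne _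
  have hrow (i : ZMod a) : ∑ j, greenMatrix a i j ^ 2 = ∑ d, cycleGreen a d ^ 2 :=
    (Equiv.subLeft i).sum_comp (cycleGreen a · ^ 2)
  simp only [hrow, sum_cycleGreen_sq, sum_const, card_univ, ZMod.card, nsmul_eq_mul]
  field_simp

theorem sub_shift_dotProduct_circulant_mulVec {G R : Type*} [AddCommGroup G] [Fintype G]
    [CommRing R] (g t : G → R) (s : G) :
    (fun n ↦ t n - t (n + s)) ⬝ᵥ circulant g *ᵥ (fun n ↦ t n - t (n + s)) =
      t ⬝ᵥ circulant (fun d ↦ 2 * g d - g (d - s) - g (d + s)) *ᵥ t := by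
  have hshift (F : G → R) : ∑ n, F (n + s) = ∑ n, F n :=
    Equiv.sum_comp (Equiv.addRight s) F
  have hboth : ∑ m, ∑ n, t (m + s) * (g (m - n) * t (n + s)) =
      ∑ m, ∑ n, t m * (g (m - n) * t n) := by
    rw [← hshift fun m ↦ ∑ n, t m * (g (m - n) * t n)]
    refine sum_congr rfl fun m _ ↦ ?_
    rw [← hshift fun n ↦ t (m + s) * (g (m + s - n) * t n)]
    simp only [add_sub_add_right_eq_sub]
  have hleft : ∑ m, ∑ n, t (m + s) * (g (m - n) * t n) =
      ∑ m, ∑ n, t m * (g (m - n - s) * t n) := by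
    rw [← hshift fun m ↦ ∑ n, t m * (g (m - n - s) * t n)]
    simp only [add_sub_right_comm _ s, sub_add_cancel]
  have hright : ∑ m, ∑ n, t m * (g (m - n) * t (n + s)) =
      ∑ m, ∑ n, t m * (g (m - n + s) * t n) := by
    refine sum_congr rfl fun m _ ↦ ?_
    rw [← hshift fun n ↦ t m * (g (m - n + s) * t n)]
    simp only [sub_add_eq_sub_sub, sub_add_cancel]
  simp only [dotProduct, mulVec, circulant_apply, mul_sum]
  simp only [two_mul, add_mul, mul_add, sub_mul, mul_sub, sum_add_distrib, sum_sub_distrib,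
    hboth, hleft, hright]
  ring

theorem sq_mul_dotProduct_greenMatrix_mulVec {u t : ZMod a → ℚ} {c : ℚ}
    (h : ∀ n, a * u n = t n - t (n + 1) + c) :
    (a : ℚ) ^ 2 * (u ⬝ᵥ greenMatrix a *ᵥ u) = ∑ n, t n ^ 2 - (∑ n, t n) ^ 2 / a := by
  have hu : (a : ℚ) • u = (fun n ↦ t n - t (n + 1)) + c • 1 := by
    ext n
    simp [h]
  calc (a : ℚ) ^ 2 * (u ⬝ᵥ greenMatrix a *ᵥ u)
      = ((a : ℚ) • u) ⬝ᵥ greenMatrix a *ᵥ ((a : ℚ) • u) := by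
        rw [mulVec_smul, smul_dotProduct, dotProduct_smul, smul_eq_mul, smul_eq_mul]
        ring
    _ = t ⬝ᵥ circulant (fun d : ZMod a ↦ (if d = 0 then 1 else 0) - 1 / (a : ℚ)) *ᵥ t := by
        rw [hu, add_const_dotProduct_mulVec (isSymm_greenMatrix a) (greenMatrix_mulVec_one a),
          greenMatrix, sub_shift_dotProduct_circulant_mulVec]
        simp only [laplacian_cycleGreen]
    _ = ∑ n, t n ^ 2 - (∑ n, t n) ^ 2 / a := by
        have hmulVec (m : ZMod a) :
            ∑ n, ((if m = n then 1 else 0) - 1 / (a : ℚ)) * t n = t m - (∑ n, t n) / a := by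
          simp [sub_mul, ← mul_sum, div_eq_inv_mul]
        simp only [dotProduct, mulVec, circulant_apply, sub_eq_zero, hmulVec, mul_sub,
          sum_sub_distrib, ← sum_mul, sq, mul_div_assoc]

end GreenMatrix

section BetaSets

variable {μ ν : YoungDiagram}

theorem lt_rowLen_iff_lt_colLen {i j : ℕ} : j < μ.rowLen i ↔ i < μ.colLen j := by
  rw [← YoungDiagram.mem_iff_lt_rowLen, YoungDiagram.mem_iff_lt_colLen]

theorem card_eq_sum_rowLen (μ : YoungDiagram) : μ.card = ∑ i ∈ range (μ.colLen 0), μ.rowLen i := by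
  have hmaps : ∀ c ∈ μ.cells, c.1 ∈ range (μ.colLen 0) := fun c hc ↦ by
    have hc' := YoungDiagram.mem_iff_lt_rowLen.mp ((YoungDiagram.mem_cells c).mp hc)
    exact mem_range.mpr (lt_rowLen_iff_lt_colLen.mp (Nat.zero_lt_of_lt hc'))
  rw [YoungDiagram.card, card_eq_sum_card_fiberwise hmaps]
  exact sum_congr rfl fun i _ ↦ μ.rowLen_eq_card.symm

theorem eq_of_colLen_eq (h : ∀ j, μ.colLen j = ν.colLen j) : μ = ν := by
  ext ⟨i, j⟩
  simp only [YoungDiagram.mem_cells, YoungDiagram.mem_iff_lt_colLen, h]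

theorem exists_colLen_eq {F : ℕ → ℕ} (hF : Antitone F) {M : ℕ} (hM : F M = 0) :
    ∃ μ : YoungDiagram, ∀ j, μ.colLen j = F j := by
  have hmem (c : ℕ × ℕ) : c ∈ {c ∈ range (F 0) ×ˢ range M | c.1 < F c.2} ↔ c.1 < F c.2 := by
    have h0 := hF (Nat.zero_le c.2)
    have hc : M ≤ c.2 → F c.2 ≤ F M := fun h ↦ hF h
    simp only [mem_filter, mem_product, mem_range]
    omega
  let μ : YoungDiagram :=
    { cells := {c ∈ range (F 0) ×ˢ range M | c.1 < F c.2}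
      isLowerSet := fun c c' hle hc ↦ by
        rw [mem_coe, hmem] at hc ⊢
        exact hle.1.trans_lt (hc.trans_le (hF hle.2)) }
  refine ⟨μ, fun j ↦ eq_of_forall_lt_iff fun i ↦ ?_⟩
  rw [← YoungDiagram.mem_iff_lt_colLen, ← YoungDiagram.mem_cells]
  exact hmem (i, j)

/-- The beta set of a Young diagram: the set of hook lengths of its first column. -/
def betaSet (μ : YoungDiagram) : Finset ℕ :=
  (range (μ.colLen 0)).image (μ.hookLength · 0)

theorem hookLength_zero_add {i : ℕ} (hi : i < μ.colLen 0) :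
    μ.hookLength i 0 + (i + 1) = μ.rowLen i + μ.colLen 0 := by
  rw [YoungDiagram.hookLength]
  omega

theorem mem_betaSet {n : ℕ} :
    n ∈ betaSet μ ↔ ∃ i < μ.colLen 0, n + (i + 1) = μ.rowLen i + μ.colLen 0 := by
  simp only [betaSet, mem_image, mem_range]
  refine exists_congr fun i ↦ and_congr_right fun hi ↦ ?_
  have := hookLength_zero_add hi
  omega

theorem zero_notMem_betaSet (μ : YoungDiagram) : 0 ∉ betaSet μ := fun h ↦ by
  obtain ⟨i, hi, h⟩ := mem_betaSet.mp h
  have := lt_rowLen_iff_lt_colLen.mpr hi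
  omega

theorem injOn_hookLength_zero (μ : YoungDiagram) :
    Set.InjOn (μ.hookLength · 0) (range (μ.colLen 0)) := by
  intro i hi k hk h
  have hi' := hookLength_zero_add (mem_range.mp hi)
  have hk' := hookLength_zero_add (mem_range.mp hk)
  rcases le_total i k with hik | hik
  all_goals
    have := μ.rowLen_anti _ _ hik
    simp only at h
    omega

theorem card_betaSet (μ : YoungDiagram) : #(betaSet μ) = μ.colLen 0 := by
  rw [betaSet, card_image_of_injOn (injOn_hookLength_zero μ), card_range]

theorem sum_betaSet (μ : YoungDiagram) :
    ∑ n ∈ betaSet μ, (n : ℚ) = μ.card + #(betaSet μ) * (#(betaSet μ) - 1) / 2 := by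
  have hhook : ∀ i ∈ range (μ.colLen 0),
      (μ.hookLength i 0 : ℚ) = μ.rowLen i + (μ.colLen 0 - 1) - i := fun i hi ↦ by
    have : (μ.hookLength i 0 + (i + 1) : ℚ) = μ.rowLen i + μ.colLen 0 := by
      exact_mod_cast hookLength_zero_add (mem_range.mp hi)
    linarith
  rw [card_betaSet, betaSet, sum_image (injOn_hookLength_zero μ), sum_congr rfl hhook,
    sum_sub_distrib, sum_add_distrib, ← Nat.cast_sum, ← card_eq_sum_rowLen, sum_const, card_range,
    nsmul_eq_mul, (sum_range_pow_le_four _).1]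
  ring

/-- The gap of the beta set of `μ` corresponding to the column `j`. -/
def columnGap (μ : YoungDiagram) (j : ℕ) : ℕ :=
  j + (μ.colLen 0 - μ.colLen j)

theorem columnGap_add_colLen (μ : YoungDiagram) (j : ℕ) :
    columnGap μ j + μ.colLen j = j + μ.colLen 0 := by
  have := μ.colLen_anti 0 j (Nat.zero_le j)
  rw [columnGap]
  omega

theorem strictMono_columnGap (μ : YoungDiagram) : StrictMono (columnGap μ) := by
  intro j k hjk
  have hj := columnGap_add_colLen μ j
  have hk := columnGap_add_colLen μ k
  have := μ.colLen_anti j k hjk.le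
  omega

theorem columnGap_notMem_betaSet (μ : YoungDiagram) (j : ℕ) : columnGap μ j ∉ betaSet μ := by
  intro h
  obtain ⟨i, -, h⟩ := mem_betaSet.mp h
  have hj := columnGap_add_colLen μ j
  have := lt_rowLen_iff_lt_colLen (μ := μ) (i := i) (j := j)
  omega

theorem exists_columnGap_eq {n : ℕ} (hn : n ∉ betaSet μ) : ∃ j, columnGap μ j = n := by
  have hlast : μ.rowLen (μ.colLen 0) = 0 := by
    have := lt_rowLen_iff_lt_colLen (μ := μ) (i := μ.colLen 0) (j := 0)
    omega
  have hex : ∃ i, μ.rowLen i + μ.colLen 0 ≤ n + i := ⟨μ.colLen 0, by omega⟩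
  obtain ⟨i, hi, hmin⟩ : ∃ i, μ.rowLen i + μ.colLen 0 ≤ n + i ∧
      ∀ k < i, n + k < μ.rowLen k + μ.colLen 0 :=
    ⟨Nat.find hex, Nat.find_spec hex, fun k hk ↦ not_le.mp (Nat.find_min hex hk)⟩
  have hle : i ≤ μ.colLen 0 := by
    by_contra! h
    have := hmin _ h
    omega
  have hcol : μ.colLen (n + i - μ.colLen 0) = i := by
    refine eq_of_forall_lt_iff fun k ↦ ?_
    rw [← lt_rowLen_iff_lt_colLen]
    constructor
    · intro hk
      by_contra! hik
      have := μ.rowLen_anti i k hik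
      omega
    · intro hk
      have hlt := hmin (i - 1) (by omega)
      have hne : n + (i - 1 + 1) ≠ μ.rowLen (i - 1) + μ.colLen 0 := fun h ↦
        hn (mem_betaSet.mpr ⟨i - 1, by omega, h⟩)
      have := μ.rowLen_anti k (i - 1) (by omega)
      omega
  refine ⟨n + i - μ.colLen 0, ?_⟩
  have := columnGap_add_colLen μ (n + i - μ.colLen 0)
  omega

theorem range_columnGap (μ : YoungDiagram) : Set.range (columnGap μ) = (betaSet μ : Set ℕ)ᶜ :=
  Set.Subset.antisymm (Set.range_subset_iff.mpr (columnGap_notMem_betaSet μ))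
    fun _ hn ↦ exists_columnGap_eq hn

theorem betaSet_injective : Function.Injective betaSet := by
  intro μ ν h
  have hgap : columnGap μ = columnGap ν :=
    ((strictMono_columnGap μ).range_inj (strictMono_columnGap ν)).mp (by
      rw [range_columnGap, range_columnGap, h])
  have hcard : μ.colLen 0 = ν.colLen 0 := by rw [← card_betaSet, h, card_betaSet]
  refine eq_of_colLen_eq fun j ↦ ?_
  have hμ := columnGap_add_colLen μ j
  have hν := columnGap_add_colLen ν j
  rw [hgap] at hμ
  omega

theorem nth_notMem_eq_add_card (B : Finset ℕ) (j : ℕ) :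
    Nat.nth (· ∉ B) j = j + #{n ∈ B | n < Nat.nth (· ∉ B) j} := by
  have hcount : #{n ∈ range (Nat.nth (· ∉ B) j) | n ∉ B} = j := by
    rw [← Nat.count_eq_card_filter_range,
      Nat.count_nth_of_infinite (p := (· ∉ B)) B.finite_toSet.infinite_compl]
  have hsplit := card_filter_add_card_filter_not (s := range (Nat.nth (· ∉ B) j)) (· ∈ B)
  have hcomm : {n ∈ range (Nat.nth (· ∉ B) j) | n ∈ B} = {n ∈ B | n < Nat.nth (· ∉ B) j} := by
    ext n
    simp only [mem_filter, mem_range, and_comm]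
  rw [hcount, hcomm, card_range] at hsplit
  omega

theorem card_filter_lt_add_card_filter_gt {B : Finset ℕ} {m : ℕ} (hm : m ∉ B) :
    #{n ∈ B | n < m} + #{n ∈ B | m < n} = #B := by
  have hnot : {n ∈ B | ¬ n < m} = {n ∈ B | m < n} := filter_congr fun n hn ↦ by
    have : n ≠ m := fun h ↦ hm (h ▸ hn)
    omega
  rw [← hnot, card_filter_add_card_filter_not]

theorem exists_betaSet_eq {B : Finset ℕ} (hB : 0 ∉ B) : ∃ μ, betaSet μ = B := by
  have hinf : {n | n ∉ B}.Infinite := B.finite_toSet.infinite_compl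
  set gap : ℕ → ℕ := Nat.nth (· ∉ B)
  have hmono : StrictMono gap := Nat.nth_strictMono hinf
  have hgap (j : ℕ) : gap j = j + #{n ∈ B | n < gap j} := nth_notMem_eq_add_card B j
  have hsplit (j : ℕ) : #{n ∈ B | n < gap j} + #{n ∈ B | gap j < n} = #B :=
    card_filter_lt_add_card_filter_gt (Nat.nth_mem_of_infinite hinf j)
  obtain ⟨μ, hμ⟩ : ∃ μ : YoungDiagram, ∀ j, μ.colLen j = #{n ∈ B | gap j < n} := by
    refine exists_colLen_eq (M := B.sup id) (fun j k hjk ↦ ?_) ?_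
    · exact card_le_card (monotone_filter_right B fun n _ hn ↦ (hmono.monotone hjk).trans_lt hn)
    · refine card_eq_zero.mpr (filter_eq_empty_iff.mpr fun n hn ↦ not_lt.mpr ?_)
      exact (le_sup (f := id) hn).trans hmono.le_apply
  have hcol : columnGap μ = gap := by
    have hgap_zero : gap 0 = 0 := Nat.nth_zero_of_zero hB
    ext j
    have hj := columnGap_add_colLen μ j
    rw [hμ, hμ] at hj
    have := hgap 0
    have := hsplit 0
    have := hgap j
    have := hsplit j
    omega
  refine ⟨μ, coe_injective (compl_injective ?_)⟩
  rw [← range_columnGap, hcol]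
  exact Nat.range_nth_of_infinite hinf

theorem columnGap_add_hookLength {i j : ℕ} (h : (i, j) ∈ μ) :
    columnGap μ j + μ.hookLength i j = μ.hookLength i 0 := by
  have hi := YoungDiagram.mem_iff_lt_rowLen.mp h
  have hj := YoungDiagram.mem_iff_lt_colLen.mp h
  have := μ.colLen_anti 0 j (Nat.zero_le j)
  simp only [columnGap, YoungDiagram.hookLength]
  omega

theorem mem_iff_columnGap_lt {i j : ℕ} (hi : i < μ.colLen 0) :
    (i, j) ∈ μ ↔ columnGap μ j < μ.hookLength i 0 := by
  have hgap := columnGap_add_colLen μ j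
  have hhook := hookLength_zero_add hi
  have := lt_rowLen_iff_lt_colLen (μ := μ) (i := i) (j := j)
  rw [YoungDiagram.mem_iff_lt_rowLen]
  omega

/-- A set of beads is flush on the `a`-abacus if every bead can be moved down by `a` only onto
another bead. -/
def IsFlush (a : ℕ) (B : Finset ℕ) : Prop :=
  ∀ n, n + a ∈ B → n ∈ B

theorem IsFlush.mem_of_add_mul_mem {a : ℕ} {B : Finset ℕ} (hB : IsFlush a B) {n : ℕ} (k : ℕ)
    (h : n + a * k ∈ B) : n ∈ B := by
  induction k with
  | zero => simpa using h
  | succ k ih => exact ih (hB _ (by rwa [add_assoc, ← Nat.mul_succ]))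

theorem isCore_iff_isFlush_betaSet {a : ℕ} : μ.IsCore a ↔ IsFlush a (betaSet μ) := by
  constructor
  · intro hcore n hna
    by_contra hn
    obtain ⟨j, rfl⟩ := exists_columnGap_eq hn
    obtain ⟨i, hi, hhook⟩ := mem_image.mp hna
    have ha : a ≠ 0 := by
      rintro rfl
      exact hn hna
    have hij : (i, j) ∈ μ := (mem_iff_columnGap_lt (mem_range.mp hi)).mpr (by omega)
    have := columnGap_add_hookLength hij
    exact hcore i j hij ⟨1, by omega⟩
  · rintro hB i j hij ⟨k, hk⟩
    have hi : i < μ.colLen 0 :=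
      (YoungDiagram.mem_iff_lt_colLen.mp hij).trans_le (μ.colLen_anti 0 j (Nat.zero_le j))
    refine columnGap_notMem_betaSet μ j (hB.mem_of_add_mul_mem k ?_)
    rw [← hk, columnGap_add_hookLength hij]
    exact mem_image_of_mem _ (mem_range.mpr hi)

theorem bijOn_betaSet (a b : ℕ) :
    Set.BijOn betaSet {μ | μ.IsCore a ∧ μ.IsCore b} {B | 0 ∉ B ∧ IsFlush a B ∧ IsFlush b B} := by
  simp only [isCore_iff_isFlush_betaSet]
  refine ⟨fun μ hμ ↦ ⟨zero_notMem_betaSet μ, hμ⟩, betaSet_injective.injOn, ?_⟩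
  rintro B ⟨hB, hflush⟩
  obtain ⟨μ, rfl⟩ := exists_betaSet_eq hB
  exact ⟨μ, hflush, rfl⟩

end BetaSets

section FirstGaps

variable {a b : ℕ}

theorem exists_eq_add_mul_of_cast_eq {m n : ℕ} (h : (m : ZMod a) = n) (hmn : m ≤ n) :
    ∃ k, n = m + a * k := by
  obtain ⟨k, hk⟩ := (Nat.modEq_iff_dvd' hmn).mp ((ZMod.natCast_eq_natCast_iff m n a).mp h)
  exact ⟨k, by omega⟩

theorem eq_of_lt_iff_lt {T T' : ZMod a → ℕ} (hT : ∀ r, (T r : ZMod a) = r)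
    (hT' : ∀ r, (T' r : ZMod a) = r) (h : ∀ n : ℕ, n < T n ↔ n < T' n) : T = T' := by
  ext r
  have hr := h (T r)
  have hr' := h (T' r)
  rw [hT] at hr
  rw [hT'] at hr'
  omega

/-- The functions that arise as `firstGap a B` for sets `B` of positive integers that are flush for
both `a` and `b`. -/
def gapFunctions (a b : ℕ) : Set (ZMod a → ℕ) :=
  {T | (∀ r, (T r : ZMod a) = r) ∧ T 0 = 0 ∧ ∀ r, T (r + b) ≤ T r + b}

variable [NeZero a] {B : Finset ℕ}

/-- The first gap of `B` on the runner `r` of the `a`-abacus: the least natural number congruent to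
`r` modulo `a` outside `B`. -/
noncomputable def firstGap (a : ℕ) (B : Finset ℕ) (r : ZMod a) : ℕ :=
  sInf {n : ℕ | (n : ZMod a) = r ∧ n ∉ B}

theorem firstGap_spec (B : Finset ℕ) (r : ZMod a) :
    (firstGap a B r : ZMod a) = r ∧ firstGap a B r ∉ B := by
  refine Nat.sInf_mem (s := {n : ℕ | (n : ZMod a) = r ∧ n ∉ B})
    ⟨r.val + a * (B.sup id + 1), by simp, fun h ↦ ?_⟩
  have hsup : r.val + a * (B.sup id + 1) ≤ B.sup id := le_sup (f := id) h
  have := Nat.le_mul_of_pos_left (B.sup id + 1) (NeZero.pos a)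
  omega

theorem IsFlush.mem_iff_lt_firstGap (hB : IsFlush a B) (n : ℕ) : n ∈ B ↔ n < firstGap a B n := by
  obtain ⟨hcast, hgap⟩ := firstGap_spec B (n : ZMod a)
  constructor
  · intro hn
    by_contra! hle
    obtain ⟨k, hk⟩ := exists_eq_add_mul_of_cast_eq hcast hle
    exact hgap (hB.mem_of_add_mul_mem k (hk ▸ hn))
  · intro hlt
    by_contra hn
    exact Nat.notMem_of_lt_sInf hlt ⟨rfl, hn⟩

theorem firstGap_mem_gapFunctions (hB : 0 ∉ B) (ha : IsFlush a B) (hb : IsFlush b B) :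
    firstGap a B ∈ gapFunctions a b := by
  refine ⟨fun r ↦ (firstGap_spec B r).1, Nat.sInf_eq_zero.mpr (.inl ⟨by simp, hB⟩), fun r ↦ ?_⟩
  obtain ⟨hcast, hgap⟩ := firstGap_spec B r
  have hnext : firstGap a B r + b ∉ B := fun h ↦ hgap (hb _ h)
  rw [ha.mem_iff_lt_firstGap, Nat.cast_add, hcast] at hnext
  exact not_lt.mp hnext

theorem exists_firstGap_eq {T : ZMod a → ℕ} (hT : T ∈ gapFunctions a b) :
    ∃ B, (0 ∉ B ∧ IsFlush a B ∧ IsFlush b B) ∧ firstGap a B = T := by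
  obtain ⟨hcast, hzero, hstep⟩ := hT
  have hmem (n : ℕ) : n ∈ ({n ∈ range (univ.sup T) | n < T (Nat.cast n)} : Finset ℕ) ↔ n < T n := by
    simp only [mem_filter, mem_range, and_iff_right_iff_imp]
    exact fun h ↦ h.trans_le (le_sup (mem_univ _))
  set B : Finset ℕ := {n ∈ range (univ.sup T) | n < T (Nat.cast n)}
  have ha : IsFlush a B := fun n hn ↦ by
    rw [hmem] at hn ⊢
    rw [Nat.cast_add, ZMod.natCast_self, add_zero] at hn
    omega
  have hb : IsFlush b B := fun n hn ↦ by
    rw [hmem] at hn ⊢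
    have := hstep n
    push_cast at hn
    omega
  refine ⟨B, ⟨by simp [hmem, hzero], ha, hb⟩, ?_⟩
  refine eq_of_lt_iff_lt (fun r ↦ (firstGap_spec B r).1) hcast fun n ↦ ?_
  rw [← ha.mem_iff_lt_firstGap, hmem]

theorem bijOn_firstGap (a b : ℕ) [NeZero a] :
    Set.BijOn (firstGap a) {B | 0 ∉ B ∧ IsFlush a B ∧ IsFlush b B} (gapFunctions a b) := by
  refine ⟨fun B hB ↦ firstGap_mem_gapFunctions hB.1 hB.2.1 hB.2.2, ?_,
    fun T hT ↦ exists_firstGap_eq hT⟩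
  intro B hB B' hB' h
  ext n
  rw [hB.2.1.mem_iff_lt_firstGap, hB'.2.1.mem_iff_lt_firstGap, h]

theorem firstGap_injective (a : ℕ) [NeZero a] (B : Finset ℕ) :
    Function.Injective (firstGap a B) := fun r s h ↦ by
  rw [← (firstGap_spec B r).1, h, (firstGap_spec B s).1]

theorem lt_firstGap_add_iff (B : Finset ℕ) (n : ℕ) :
    n < firstGap a B n + a ↔ n ≤ firstGap a B n := by
  have ha := NeZero.pos a
  refine ⟨fun h ↦ ?_, fun h ↦ by omega⟩
  by_contra! hlt
  obtain ⟨k, hk⟩ := exists_eq_add_mul_of_cast_eq (firstGap_spec B (n : ZMod a)).1 hlt.le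
  have := Nat.le_mul_of_pos_right a (Nat.pos_of_ne_zero (by rintro rfl; omega : k ≠ 0))
  omega

theorem IsFlush.map_add_union_range (hB : IsFlush a B) :
    B.map (addRightEmbedding a) ∪ range a =
      B ∪ univ.map ⟨firstGap a B, firstGap_injective a B⟩ := by
  ext n
  have hmoved : n ∈ B.map (addRightEmbedding a) ∨ n < a ↔ n < firstGap a B n + a := by
    rcases lt_or_ge n a with h | h
    · simp only [h, or_true, true_iff]
      omega
    · obtain ⟨m, rfl⟩ := Nat.exists_eq_add_of_le' h
      have hm : m + a ∈ B.map (addRightEmbedding a) ↔ m ∈ B := mem_map' (addRightEmbedding a)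
      simp [hm, hB.mem_iff_lt_firstGap]
  have hfilled : (∃ r, firstGap a B r = n) ↔ n = firstGap a B n := by
    refine ⟨?_, fun h ↦ ⟨n, h.symm⟩⟩
    rintro ⟨r, rfl⟩
    rw [(firstGap_spec B r).1]
  rw [mem_union, mem_union, mem_range, hmoved, lt_firstGap_add_iff, le_iff_lt_or_eq,
    hB.mem_iff_lt_firstGap, ← hfilled]
  simp only [mem_map, mem_univ, true_and, Function.Embedding.coeFn_mk]

-- Moving every bead of a flush abacus up by one place on its runner fills the first gaps and
-- empties the bottom row.
theorem IsFlush.sum_add_sum_range (hB : IsFlush a B) {M : Type*} [AddCommMonoid M] (φ : ℕ → M) :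
    ∑ n ∈ B, φ (n + a) + ∑ v ∈ range a, φ v = ∑ n ∈ B, φ n + ∑ r, φ (firstGap a B r) := by
  have hbottom : Disjoint (B.map (addRightEmbedding a)) (range a) := by
    simp only [disjoint_left, mem_map, addRightEmbedding_apply, mem_range]
    omega
  have hgaps : Disjoint B (univ.map ⟨firstGap a B, firstGap_injective a B⟩) := by
    simp only [disjoint_right, mem_map, mem_univ, true_and, Function.Embedding.coeFn_mk]
    rintro _ ⟨r, rfl⟩
    exact (firstGap_spec B r).2
  have hsum := congrArg (fun s ↦ ∑ n ∈ s, φ n) hB.map_add_union_range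
  simpa only [sum_union hbottom, sum_union hgaps, sum_map, addRightEmbedding_apply,
    Function.Embedding.coeFn_mk] using hsum

theorem card_eq_of_isCore {μ : YoungDiagram} (hμ : μ.IsCore a) :
    (μ.card : ℚ) = (∑ r, (firstGap a (betaSet μ) r : ℚ) ^ 2
      - (∑ r, (firstGap a (betaSet μ) r : ℚ)) ^ 2 / a) / (2 * a) - ((a : ℚ) ^ 2 - 1) / 24 := by
  have ha : (a : ℚ) ≠ 0 := NeZero.ne _
  have hflush := isCore_iff_isFlush_betaSet.mp hμ
  have hlin := hflush.sum_add_sum_range fun n ↦ (n : ℚ)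
  have hsq := hflush.sum_add_sum_range fun n ↦ (n : ℚ) ^ 2
  obtain ⟨h₁, h₂, -, -⟩ := sum_range_pow_le_four a
  simp only [Nat.cast_add, add_sq, sum_add_distrib, ← sum_mul, ← mul_sum, sum_const, nsmul_eq_mul,
    h₁, h₂, sum_betaSet] at hlin hsq
  have hgap : ∑ r, (firstGap a (betaSet μ) r : ℚ) = #(betaSet μ) * a + a * (a - 1) / 2 := by
    linarith
  have hgap_sq : ∑ r, (firstGap a (betaSet μ) r : ℚ) ^ 2 =
      2 * (μ.card + #(betaSet μ) * (#(betaSet μ) - 1) / 2) * a + #(betaSet μ) * a ^ 2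
        + a * (a - 1) * (2 * a - 1) / 6 := by
    linarith
  rw [hgap, hgap_sq]
  field_simp
  ring

end FirstGaps

section CyclicCompositions

variable {a b : ℕ}

theorem exists_mul_add_eq (hab : a.Coprime b) (r s : ZMod a) : ∃ n : ZMod a, n * b + r = s :=
  ⟨(s - r) * (b : ZMod a)⁻¹, by linear_combination (s - r) * ZMod.coe_mul_inv_eq_one b hab.symm⟩

variable [NeZero a]

theorem eq_of_periodic_one {α : Type*} {f : ZMod a → α} (hf : Function.Periodic f 1)
    (m n : ZMod a) : f m = f n := by
  have hzero (k : ZMod a) : f k = f 0 := by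
    simpa using hf.nat_mul_eq k.val
  rw [hzero m, hzero n]

theorem exists_sub_eq_of_sum_eq_zero {M : Type*} [AddCommGroup M] {d : ZMod a → M}
    (hd : ∑ n, d n = 0) : ∃ t : ZMod a → M, ∀ n, t (n + 1) - t n = d n := by
  have hsum : ∑ i ∈ range a, d i = 0 := by
    rw [← hd, ← sum_comp_val a fun i ↦ d i]
    simp
  refine ⟨fun n ↦ ∑ i ∈ range n.val, d i, fun n ↦ ?_⟩
  have hcast : ((n.val + 1 : ℕ) : ZMod a) = n + 1 := by simp
  have hsucc : ∑ i ∈ range (n + 1).val, d i = ∑ i ∈ range (n.val + 1), d i := by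
    rcases (Nat.succ_le_of_lt (ZMod.val_lt n)).lt_or_eq with h | h
    · rw [← hcast, ZMod.val_natCast_of_lt h]
    · rw [← hcast, ← Nat.succ_eq_add_one, h, hsum]
      simp
  simp only [hsucc, sum_range_succ, add_sub_cancel_left, ZMod.natCast_zmod_val]

theorem exists_potential {x : ZMod a → ℕ} (hx : ∑ n, x n = b) :
    ∃ (t : ZMod a → ℕ) (n₀ : ZMod a), t n₀ = 0 ∧ ∀ n, a * x n + t (n + 1) = t n + b := by
  obtain ⟨t, ht⟩ := exists_sub_eq_of_sum_eq_zero (d := fun n ↦ (b - a * x n : ℤ)) (by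
    rw [sum_sub_distrib, ← mul_sum, ← Nat.cast_sum univ x, hx]
    simp)
  obtain ⟨n₀, hmin⟩ := Finite.exists_min t
  refine ⟨fun n ↦ (t n - t n₀).toNat, n₀, by simp, fun n ↦ ?_⟩
  have := ht n
  have := hmin n
  have := hmin (n + 1)
  zify
  rw [Int.toNat_of_nonneg, Int.toNat_of_nonneg] <;> omega

theorem potential_unique {t t' : ZMod a → ℕ} (h : ∀ n, t (n + 1) + t' n = t n + t' (n + 1))
    {n₀ m₀ : ZMod a} (ht : t n₀ = 0) (ht' : t' m₀ = 0) : t = t' := by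
  have hconst := eq_of_periodic_one (f := fun n ↦ (t n - t' n : ℤ)) fun n ↦ by
    have := h n
    simp only
    omega
  ext n
  have := hconst n n₀
  have := hconst n m₀
  omega

/-- The normalised step lengths of `T` along the walk `r, r + b, r + 2 b, …` through `ZMod a`. For
`T ∈ gapFunctions a b` both the subtraction and the division are exact. -/
def cyclicSteps (b : ℕ) (T : ZMod a → ℕ) (r n : ZMod a) : ℕ :=
  (T (n * b + r) + b - T ((n + 1) * b + r)) / a

variable {T T' : ZMod a → ℕ}

theorem mul_cyclicSteps_add (hT : T ∈ gapFunctions a b) (r n : ZMod a) :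
    a * cyclicSteps b T r n + T ((n + 1) * b + r) = T (n * b + r) + b := by
  obtain ⟨hcast, -, hstep⟩ := hT
  have hnext : (n + 1) * b + r = n * b + r + b := by ring
  obtain ⟨k, hk⟩ := exists_eq_add_mul_of_cast_eq (a := a) (by simp [hcast]) (hstep (n * b + r))
  rw [cyclicSteps, hnext, hk, Nat.add_sub_cancel_left, Nat.mul_div_cancel_left _ (NeZero.pos a),
    add_comm]

theorem sum_cyclicSteps (hT : T ∈ gapFunctions a b) (r : ZMod a) :
    ∑ n, cyclicSteps b T r n = b := by
  have hshift : ∑ n, T ((n + 1) * b + r) = ∑ n, T (n * b + r) :=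
    Equiv.sum_comp (Equiv.addRight (1 : ZMod a)) fun n ↦ T (n * b + r)
  have hsum := sum_congr rfl fun n (_ : n ∈ univ) ↦ mul_cyclicSteps_add hT r n
  simp only [sum_add_distrib, ← mul_sum, hshift, sum_const, card_univ, ZMod.card,
    smul_eq_mul] at hsum
  exact Nat.eq_of_mul_eq_mul_left (NeZero.pos a) (by omega)

theorem cyclicSteps_injective (hab : a.Coprime b) (hT : T ∈ gapFunctions a b)
    (hT' : T' ∈ gapFunctions a b) {r r' : ZMod a} (h : cyclicSteps b T r = cyclicSteps b T' r') :
    T = T' ∧ r = r' := by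
  obtain ⟨n₀, hn₀⟩ := exists_mul_add_eq hab r 0
  obtain ⟨m₀, hm₀⟩ := exists_mul_add_eq hab r' 0
  have hwalk : (fun n ↦ T (n * b + r)) = fun n ↦ T' (n * b + r') := by
    refine potential_unique (n₀ := n₀) (m₀ := m₀) (fun n ↦ ?_) ?_ ?_
    · have hn := mul_cyclicSteps_add hT r n
      have hn' := mul_cyclicSteps_add hT' r' n
      rw [h] at hn
      omega
    · rw [hn₀, hT.2.1]
    · rw [hm₀, hT'.2.1]
  obtain rfl : r = r' := by
    have hzero := congrArg (Nat.cast : ℕ → ZMod a) (congrFun hwalk 0)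
    simpa only [hT.1, hT'.1, zero_mul, zero_add] using hzero
  refine ⟨funext fun s ↦ ?_, rfl⟩
  obtain ⟨n, rfl⟩ := exists_mul_add_eq hab r s
  exact congrFun hwalk n

theorem exists_cyclicSteps_eq (hab : a.Coprime b) {x : ZMod a → ℕ} (hx : ∑ n, x n = b) :
    ∃ T ∈ gapFunctions a b, ∃ r, cyclicSteps b T r = x := by
  obtain ⟨t, n₀, hzero, ht⟩ := exists_potential hx
  have hinv : (b : ZMod a) * (b : ZMod a)⁻¹ = 1 := ZMod.coe_mul_inv_eq_one b hab.symm
  have hcast (n : ZMod a) : (t n : ZMod a) = (n - n₀) * b := by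
    have hper : Function.Periodic (fun n ↦ (t n - n * b : ZMod a)) 1 := fun n ↦ by
      have hn := congrArg (Nat.cast : ℕ → ZMod a) (ht n)
      push_cast [ZMod.natCast_self] at hn
      linear_combination hn
    have hn := eq_of_periodic_one hper n n₀
    simp only [hzero, Nat.cast_zero] at hn
    linear_combination hn
  let T (s : ZMod a) : ℕ := t (s * (b : ZMod a)⁻¹ + n₀)
  have hwalk (n : ZMod a) : T (n * b + -n₀ * b) = t n :=
    congrArg t (by linear_combination (n - n₀) * hinv)
  have hT : T ∈ gapFunctions a b := by
    refine ⟨fun s ↦ ?_, by simp [T, hzero], fun s ↦ ?_⟩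
    · rw [hcast]
      linear_combination s * hinv
    · have hnext : (s + b) * (b : ZMod a)⁻¹ + n₀ = s * (b : ZMod a)⁻¹ + n₀ + 1 := by
        linear_combination hinv
      have := ht (s * (b : ZMod a)⁻¹ + n₀)
      simp only [T, hnext]
      omega
  refine ⟨T, hT, -n₀ * b, funext fun n ↦ ?_⟩
  have hn := mul_cyclicSteps_add hT (-n₀ * b) n
  rw [hwalk, hwalk, ← ht n] at hn
  exact Nat.eq_of_mul_eq_mul_left (NeZero.pos a) (Nat.add_right_cancel hn)

theorem bijOn_cyclicSteps (hab : a.Coprime b) :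
    Set.BijOn (fun p : (ZMod a → ℕ) × ZMod a ↦ cyclicSteps b p.1 p.2)
      (gapFunctions a b ×ˢ Set.univ) (piAntidiag univ b : Finset (ZMod a → ℕ)) := by
  refine ⟨fun p hp ↦ ?_, fun p hp q hq h ↦ ?_, fun x hx ↦ ?_⟩
  · simpa using sum_cyclicSteps hp.1 p.2
  · exact Prod.ext_iff.mpr (cyclicSteps_injective hab hp.1 hq.1 h)
  · obtain ⟨T, hT, r, rfl⟩ := exists_cyclicSteps_eq hab (x := x) (by simpa using hx)
    exact ⟨(T, r), ⟨hT, trivial⟩, rfl⟩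

end CyclicCompositions

section SizeMoments

variable {a b : ℕ} [NeZero a]

/-- The common size of the `(a, b)`-core diagrams whose walks have step lengths `x`, as a quadratic
form in `x`. -/
noncomputable def compositionSize (x : ZMod a → ℕ) : ℚ :=
  a / 2 * ((Nat.cast ∘ x) ⬝ᵥ greenMatrix a *ᵥ (Nat.cast ∘ x)) - ((a : ℚ) ^ 2 - 1) / 24

theorem card_eq_compositionSize (hab : a.Coprime b) {μ : YoungDiagram} (ha : μ.IsCore a)
    (hb : μ.IsCore b) (r : ZMod a) :
    (μ.card : ℚ) = compositionSize (cyclicSteps b (firstGap a (betaSet μ)) r) := by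
  set T := firstGap a (betaSet μ)
  have hT : T ∈ gapFunctions a b := ((bijOn_firstGap a b).comp (bijOn_betaSet a b)).mapsTo ⟨ha, hb⟩
  have hwalk : Function.Bijective fun n : ZMod a ↦ n * b + r :=
    Finite.surjective_iff_bijective.mp (exists_mul_add_eq hab r)
  have hgreen := sq_mul_dotProduct_greenMatrix_mulVec a
    (u := Nat.cast ∘ cyclicSteps b T r) (t := fun n ↦ (T (n * b + r) : ℚ)) (c := b) fun n ↦ by
      have hn : (a * cyclicSteps b T r n + T ((n + 1) * b + r) : ℚ) = T (n * b + r) + b :=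
        mod_cast mul_cyclicSteps_add hT r n
      simp only [Function.comp_apply]
      linear_combination hn
  rw [hwalk.sum_comp fun s ↦ (T s : ℚ) ^ 2, hwalk.sum_comp fun s ↦ (T s : ℚ)] at hgreen
  rw [card_eq_of_isCore ha, ← hgreen, compositionSize]
  field_simp

theorem bijOn_cyclicSteps_firstGap_betaSet (hab : a.Coprime b) :
    Set.BijOn
      (fun p : YoungDiagram × ZMod a ↦ cyclicSteps b (firstGap a (betaSet p.1)) p.2)
      ({μ | μ.IsCore a ∧ μ.IsCore b} ×ˢ Set.univ)
      (piAntidiag univ b : Finset (ZMod a → ℕ)) :=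
  (bijOn_cyclicSteps hab).comp
    (((bijOn_firstGap a b).comp (bijOn_betaSet a b)).prodMap (Set.bijOn_id _))

theorem finite_setOf_isCore (hab : a.Coprime b) :
    {μ : YoungDiagram | μ.IsCore a ∧ μ.IsCore b}.Finite := by
  have hprod := (bijOn_cyclicSteps_firstGap_betaSet hab).finite_iff_finite.mpr (finite_toSet _)
  simpa [Set.finite_prod] using hprod

theorem mul_finsum_isCore (hab : a.Coprime b) (F : ℚ → ℚ) :
    a * ∑ᶠ μ ∈ {μ : YoungDiagram | μ.IsCore a ∧ μ.IsCore b}, F μ.card =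
      ∑ x ∈ piAntidiag (univ : Finset (ZMod a)) b, F (compositionSize x) := by
  have hbij := bijOn_cyclicSteps_firstGap_betaSet hab
  have hsize (p) (hp : p ∈ {μ : YoungDiagram | μ.IsCore a ∧ μ.IsCore b} ×ˢ Set.univ) :
      F p.1.card = F (compositionSize (cyclicSteps b (firstGap a (betaSet p.1)) p.2)) :=
    congrArg F (card_eq_compositionSize hab hp.1.1 hp.1.2 p.2)
  obtain ⟨C, hC⟩ := (finite_setOf_isCore hab).exists_finset_coe
  rw [← hC] at hbij hsize ⊢
  rw [← finsum_mem_coe_finset, ← finsum_mem_eq_of_bijOn _ hbij hsize, ← coe_univ, ← coe_product]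
  simp only [finsum_mem_coe_finset, sum_product, sum_const, card_univ, ZMod.card, nsmul_eq_mul,
    mul_sum]

theorem mul_card_isCore (hab : a.Coprime b) :
    (a * Nat.card {μ : YoungDiagram | μ.IsCore a ∧ μ.IsCore b} : ℚ) = a.multichoose b := by
  have hbij := bijOn_cyclicSteps_firstGap_betaSet hab
  have h := hbij.injOn.ncard_image
  rw [hbij.image_eq, Set.ncard_coe_finset, card_piAntidiag_univ, Set.ncard_prod, Set.ncard_univ,
    Nat.card_zmod, ZMod.card, ← Nat.card_coe_set_eq, mul_comm] at h
  exact_mod_cast h.symm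

theorem sum_compositionSize :
    ∑ x ∈ piAntidiag (univ : Finset (ZMod a)) b, compositionSize x =
      a.multichoose b * ((a - 1) * (b - 1) * (a + b + 1) / 24) := by
  have ha₀ : (a : ℚ) ≠ 0 := NeZero.ne _
  have ha₁ : (a + 1 : ℚ) ≠ 0 := by positivity
  simp only [compositionSize, sum_sub_distrib, ← mul_sum, sum_const, card_piAntidiag_univ,
    ZMod.card, nsmul_eq_mul, trace_greenMatrix,
    sum_piAntidiag_quadForm (isSymm_greenMatrix a) (greenMatrix_mulVec_one a)]
  rw [multichoose_variance (NeZero.ne a)]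
  field_simp
  ring

theorem sum_compositionSize_sq :
    ∑ x ∈ piAntidiag (univ : Finset (ZMod a)) b, compositionSize x ^ 2 =
      a.multichoose b * (a * b * (a - 1) * (b - 1) * (a + b) * (a + b + 1) / 1440 +
        ((a - 1) * (b - 1) * (a + b + 1) / 24) ^ 2) := by
  have ha₀ : (a : ℚ) ≠ 0 := NeZero.ne _
  have ha₁ : (a + 1 : ℚ) ≠ 0 := by positivity
  have ha₂ : (a + 2 : ℚ) ≠ 0 := by positivity
  have ha₃ : (a + 3 : ℚ) ≠ 0 := by positivity
  have hsq (x : ZMod a → ℕ) : compositionSize x ^ 2 =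
      (a : ℚ) ^ 2 / 4 * ((Nat.cast ∘ x) ⬝ᵥ greenMatrix a *ᵥ (Nat.cast ∘ x)) ^ 2 -
        a * (a ^ 2 - 1) / 24 * ((Nat.cast ∘ x) ⬝ᵥ greenMatrix a *ᵥ (Nat.cast ∘ x)) +
          ((a ^ 2 - 1) / 24) ^ 2 := by
    rw [compositionSize]
    ring
  simp only [hsq, sum_add_distrib, sum_sub_distrib, ← mul_sum, sum_const, card_piAntidiag_univ,
    ZMod.card, nsmul_eq_mul, trace_greenMatrix, sum_greenMatrix_diag_sq, sum_greenMatrix_sq,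
    sum_piAntidiag_quadForm (isSymm_greenMatrix a) (greenMatrix_mulVec_one a),
    sum_piAntidiag_quadForm_sq (isSymm_greenMatrix a) (greenMatrix_mulVec_one a)]
  rw [multichoose_variance (NeZero.ne a), multichoose_variance_sq (NeZero.ne a),
    multichoose_fourth_cumulant (NeZero.ne a)]
  field_simp
  ring

theorem finsum_card_isCore (hab : a.Coprime b) :
    ∑ᶠ μ ∈ {μ : YoungDiagram | μ.IsCore a ∧ μ.IsCore b}, (μ.card : ℚ) =
      Nat.card {μ : YoungDiagram | μ.IsCore a ∧ μ.IsCore b} *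
        ((a - 1) * (b - 1) * (a + b + 1) / 24) :=
  mul_left_cancel₀ (NeZero.ne (a : ℚ)) <| by
    rw [mul_finsum_isCore hab fun s ↦ s, ← mul_assoc, mul_card_isCore hab, ← sum_compositionSize]

theorem finsum_card_sq_isCore (hab : a.Coprime b) :
    ∑ᶠ μ ∈ {μ : YoungDiagram | μ.IsCore a ∧ μ.IsCore b}, (μ.card : ℚ) ^ 2 =
      Nat.card {μ : YoungDiagram | μ.IsCore a ∧ μ.IsCore b} *
        (a * b * (a - 1) * (b - 1) * (a + b) * (a + b + 1) / 1440 +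
          ((a - 1) * (b - 1) * (a + b + 1) / 24) ^ 2) :=
  mul_left_cancel₀ (NeZero.ne (a : ℚ)) <| by
    rw [mul_finsum_isCore hab fun s ↦ s ^ 2, ← mul_assoc, mul_card_isCore hab,
      ← sum_compositionSize_sq]

theorem card_isCore_ne_zero (hab : a.Coprime b) :
    (Nat.card {μ : YoungDiagram | μ.IsCore a ∧ μ.IsCore b} : ℚ) ≠ 0 := by
  refine right_ne_zero_of_mul (a := (a : ℚ)) ?_
  rw [mul_card_isCore hab, Nat.multichoose_eq, Nat.cast_ne_zero]
  exact (Nat.choose_pos (by have := NeZero.pos a; omega)).ne'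

end SizeMoments

end SimultaneousCores

/-- The variance of size over the uniform distribution on `(a,b)`-cores is
`ab(a-1)(b-1)(a+b)(a+b+1)/1440`. -/
theorem variance_size_simultaneous_cores (a b : ℕ) (ha : 0 < a) (hb : 0 < b)
    (hab : Nat.Coprime a b) :
    (∑ᶠ μ ∈ {μ : YoungDiagram | μ.IsCore a ∧ μ.IsCore b}, (μ.card : ℚ) ^ 2) /
        (Nat.card {μ : YoungDiagram | μ.IsCore a ∧ μ.IsCore b} : ℚ)
      - ((∑ᶠ μ ∈ {μ : YoungDiagram | μ.IsCore a ∧ μ.IsCore b}, (μ.card : ℚ)) /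
        (Nat.card {μ : YoungDiagram | μ.IsCore a ∧ μ.IsCore b} : ℚ)) ^ 2
      = (a : ℚ) * b * ((a : ℚ) - 1) * ((b : ℚ) - 1) * ((a : ℚ) + b) * ((a : ℚ) + b + 1)
          / 1440 := by
  have : NeZero a := ⟨ha.ne'⟩
  have hcard := SimultaneousCores.card_isCore_ne_zero hab
  rw [SimultaneousCores.finsum_card_isCore hab, SimultaneousCores.finsum_card_sq_isCore hab,
    mul_div_cancel_left₀ _ hcard, mul_div_cancel_left₀ _ hcard, add_sub_cancel_right]
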